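/- Let p ≥ 1 be a real number. Let k̃ : ℝ × [0,∞) → ℝ be a smooth function, 2π-periodic in its first (angular) variable θ, with k̃(θ,τ) > 0 everywhere, satisfying the rescaled curve-shortening equation ∂k̃/∂τ = p·k̃^{1+1/p}·∂²k̃/∂θ² + p·k̃^{2+1/p} − p·k̃ on ℝ × (0,∞), and suppose sup_θ |k̃(θ,τ) − 1| → 0 as τ → ∞. Then for every integer l ≥ 1 and every constant α with 0 < α < 1 there exists a constant C(l,p) > 0, depending only on l, p, α and the initial data k̃(·,0), such that for all τ > 0: sup_θ |∂^l k̃/∂θ^l (θ,τ)| ≤ C(l,p)·exp(−2αp·τ). -/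

import Mathlib

open Real Filter Set
open scoped ContDiff Topology

/-!
The first-harmonic moments `∫ K^(-1/p) cos` and `∫ K^(-1/p) sin`, whose vanishing says that the
curve closes up, solve `M' = M`; they stay bounded because `K → 1`, so they vanish. To first order
`K - 1` therefore has no first harmonics, and the Wirtinger inequality with constant `4` in place
of `1` makes `‖∂K‖²` decay like `exp(-2μτ)` for every `μ < 4p - (p + 1) = 3p - 1`, where
`3p - 1 ≥ 2p` if `p ≥ 1`.

Higher derivatives inherit this rate by induction. In the energy identity for `‖∂ⁿ⁺²K‖²` the
commutators are absorbed by the diffusion; interpolating between neighbouring derivatives then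
gives damping at any prescribed rate, at the price of a forcing term proportional to `‖∂ⁿ⁺¹K‖²`,
which already decays at the rate `2μ`. The Sobolev embedding in one dimension passes from energies
to suprema.
-/

/-- Smooth functions on the circle `ℝ / 2πℤ`, encoded as smooth `2π`-periodic functions on the
line so that the one-variable calculus of `deriv` applies. -/
structure SmoothPeriodic (u : ℝ → ℝ) : Prop where
  contDiff : ContDiff ℝ ∞ u
  periodic : Function.Periodic u (2 * π)

/-- The square of the `L²` norm over one period. -/
noncomputable def energy (u : ℝ → ℝ) : ℝ := ∫ x in 0..2 * π, u x ^ 2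

section Energy

variable {f g h u v : ℝ → ℝ}

theorem integral_period_mono (hf : Continuous f) (hg : Continuous g) (hfg : ∀ x, f x ≤ g x) :
    ∫ x in 0..2 * π, f x ≤ ∫ x in 0..2 * π, g x :=
  intervalIntegral.integral_mono two_pi_pos.le (hf.intervalIntegrable _ _)
    (hg.intervalIntegrable _ _) hfg

theorem integral_period_add (hf : Continuous f) (hg : Continuous g) :
    ∫ x in 0..2 * π, (f x + g x) = (∫ x in 0..2 * π, f x) + ∫ x in 0..2 * π, g x :=
  intervalIntegral.integral_add (hf.intervalIntegrable _ _) (hg.intervalIntegrable _ _)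

theorem integral_period_linear (hg : Continuous g) (hh : Continuous h) (a b : ℝ) :
    ∫ x in 0..2 * π, (a * g x + b * h x) =
      a * (∫ x in 0..2 * π, g x) + b * ∫ x in 0..2 * π, h x := by
  rw [integral_period_add (hg.const_mul a) (hh.const_mul b),
    intervalIntegral.integral_const_mul, intervalIntegral.integral_const_mul]

theorem integral_period_le_linear (hf : Continuous f) (hg : Continuous g) (hh : Continuous h)
    (a b : ℝ) (hle : ∀ x, f x ≤ a * g x + b * h x) :
    ∫ x in 0..2 * π, f x ≤ a * (∫ x in 0..2 * π, g x) + b * ∫ x in 0..2 * π, h x := by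
  rw [← integral_period_linear hg hh]
  exact integral_period_mono hf (by fun_prop) hle

theorem energy_nonneg (u : ℝ → ℝ) : 0 ≤ energy u :=
  intervalIntegral.integral_nonneg two_pi_pos.le fun _ _ => sq_nonneg _

theorem energy_add_le (hu : Continuous u) (hv : Continuous v) :
    energy (fun x => u x + v x) ≤ 2 * energy u + 2 * energy v :=
  integral_period_le_linear (by fun_prop) (by fun_prop) (by fun_prop) 2 2 fun x => by
    nlinarith only [sq_nonneg (u x - v x)]

theorem energy_le_of_sq_le (hu : Continuous u) {M : ℝ} (hM : ∀ x, u x ^ 2 ≤ M) :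
    energy u ≤ 2 * π * M := by
  simpa [energy] using integral_period_mono (hu.pow 2) continuous_const hM

theorem energy_mul_le (hu : Continuous u) (hv : Continuous v) {M : ℝ} (hM : ∀ x, u x ^ 2 ≤ M) :
    energy (fun x => u x * v x) ≤ M * energy v := by
  rw [energy, energy, ← intervalIntegral.integral_const_mul]
  refine integral_period_mono (by fun_prop) (by fun_prop) fun x => ?_
  rw [mul_pow]
  exact mul_le_mul_of_nonneg_right (hM x) (sq_nonneg _)

theorem sq_integral_mul_le_energy_mul_energy (hu : Continuous u) (hv : Continuous v) :
    (∫ x in 0..2 * π, u x * v x) ^ 2 ≤ energy u * energy v := by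
  have hexpand (t : ℝ) : energy (fun x => t * u x + v x) =
      energy u * (t * t) + 2 * (∫ x in 0..2 * π, u x * v x) * t + energy v := by
    have h := integral_period_linear (g := fun x => u x ^ 2) (h := fun x => u x * v x)
      (by fun_prop) (by fun_prop) (t * t) (2 * t)
    rw [mul_comm (energy u), mul_right_comm 2 _ t, energy, energy, energy, ← h,
      ← integral_period_add (by fun_prop) (by fun_prop)]
    exact intervalIntegral.integral_congr fun x _ => by ring
  have hdiscrim := discrim_le_zero fun t => hexpand t ▸ energy_nonneg _
  rw [discrim] at hdiscrim
  linarith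

theorem energy_cos : energy cos = π := by simp [energy]

theorem energy_sin : energy sin = π := by simp [energy]

end Energy

namespace SmoothPeriodic

variable {u v : ℝ → ℝ}

protected theorem continuous (hu : SmoothPeriodic u) : Continuous u := hu.contDiff.continuous

protected theorem differentiableAt (hu : SmoothPeriodic u) {x : ℝ} : DifferentiableAt ℝ u x :=
  hu.contDiff.differentiable (by simp) x

protected theorem hasDerivAt (hu : SmoothPeriodic u) (x : ℝ) : HasDerivAt u (deriv u x) x :=
  hu.differentiableAt.hasDerivAt

protected theorem deriv (hu : SmoothPeriodic u) : SmoothPeriodic (deriv u) where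
  contDiff := (contDiff_infty_iff_deriv.1 hu.contDiff).2
  periodic x := by
    rw [← deriv_comp_add_const]
    exact congrArg (deriv · x) hu.periodic.funext

protected theorem iteratedDeriv (hu : SmoothPeriodic u) (n : ℕ) :
    SmoothPeriodic (iteratedDeriv n u) := by
  induction n with
  | zero => rwa [iteratedDeriv_zero]
  | succ n ih => rw [iteratedDeriv_succ]; exact ih.deriv

protected theorem mul (hu : SmoothPeriodic u) (hv : SmoothPeriodic v) :
    SmoothPeriodic (fun x => u x * v x) :=
  ⟨hu.contDiff.mul hv.contDiff, hu.periodic.mul hv.periodic⟩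

protected theorem add (hu : SmoothPeriodic u) (hv : SmoothPeriodic v) :
    SmoothPeriodic (fun x => u x + v x) :=
  ⟨hu.contDiff.add hv.contDiff, hu.periodic.add hv.periodic⟩

protected theorem sub (hu : SmoothPeriodic u) (hv : SmoothPeriodic v) :
    SmoothPeriodic (fun x => u x - v x) :=
  ⟨hu.contDiff.sub hv.contDiff, hu.periodic.sub hv.periodic⟩

protected theorem cos : SmoothPeriodic cos := ⟨contDiff_cos, cos_periodic⟩

protected theorem sin : SmoothPeriodic sin := ⟨contDiff_sin, sin_periodic⟩

protected theorem comp {f : ℝ → ℝ} {U : Set ℝ} (hv : SmoothPeriodic v) (hf : ContDiffOn ℝ ∞ f U)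
    (hvU : ∀ x, v x ∈ U) : SmoothPeriodic (fun x => f (v x)) where
  contDiff := contDiffOn_univ.1 (hf.comp hv.contDiff.contDiffOn fun x _ => hvU x)
  periodic := hv.periodic.comp f

theorem deriv_comp {f : ℝ → ℝ} {U : Set ℝ} (hv : SmoothPeriodic v) (hU : IsOpen U)
    (hf : ContDiffOn ℝ ∞ f U) (hvU : ∀ x, v x ∈ U) :
    deriv (fun x => f (v x)) = fun x => deriv f (v x) * deriv v x := by
  funext x
  have hfx : DifferentiableAt ℝ f (v x) :=
    (hf.differentiableOn (by simp)).differentiableAt (hU.mem_nhds (hvU x))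
  exact (hfx.hasDerivAt.comp x (hv.hasDerivAt x)).deriv

theorem deriv_mul (hu : SmoothPeriodic u) (hv : SmoothPeriodic v) :
    deriv (fun x => u x * v x) = fun x => deriv u x * v x + u x * deriv v x :=
  funext fun _ => deriv_fun_mul hu.differentiableAt hv.differentiableAt

theorem integral_deriv (hu : SmoothPeriodic u) : ∫ x in 0..2 * π, deriv u x = 0 := by
  rw [intervalIntegral.integral_eq_sub_of_hasDerivAt (fun x _ => hu.hasDerivAt x)
    (hu.deriv.continuous.intervalIntegrable _ _), hu.periodic.eq, sub_self]

theorem integral_mul_deriv (hu : SmoothPeriodic u) (hv : SmoothPeriodic v) :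
    ∫ x in 0..2 * π, u x * deriv v x = -∫ x in 0..2 * π, deriv u x * v x := by
  have h := (hu.mul hv).integral_deriv
  rw [hu.deriv_mul hv, integral_period_add (hu.deriv.mul hv).continuous
    (hu.mul hv.deriv).continuous] at h
  linarith

theorem integral_mul_deriv_deriv (hu : SmoothPeriodic u) (hv : SmoothPeriodic v) :
    ∫ x in 0..2 * π, u x * deriv (deriv v) x = ∫ x in 0..2 * π, deriv (deriv u) x * v x := by
  rw [hu.integral_mul_deriv hv.deriv, hu.deriv.integral_mul_deriv hv, neg_neg]

theorem sq_le (hu : SmoothPeriodic u) (x : ℝ) :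
    u x ^ 2 ≤ 2 * (energy u + energy (deriv u)) := by
  have hc : Continuous u := hu.continuous
  have hc' : Continuous (deriv u) := hu.deriv.continuous
  have hprod : Continuous fun t => 2 * u t * deriv u t := (hc.const_mul 2).mul hc'
  obtain ⟨y, hy⟩ : ∃ y, u y ^ 2 ≤ energy u := by
    obtain ⟨y, -, hy⟩ := exists_eq_interval_average two_pi_pos.ne (hc.pow 2).continuousOn
    refine ⟨y, hy.trans_le ?_⟩
    rw [interval_average_eq, sub_zero, smul_eq_mul]
    exact mul_le_of_le_one_left (energy_nonneg u)
      (inv_le_one_of_one_le₀ (by linarith [pi_gt_three]))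
  obtain ⟨z, hz, hxz⟩ := hu.periodic.exists_mem_Ico two_pi_pos x y
  have hftc : u z ^ 2 - u y ^ 2 = ∫ t in y..z, 2 * u t * deriv u t :=
    (intervalIntegral.integral_eq_sub_of_hasDerivAt
      (fun t _ => by simpa using! (hu.hasDerivAt t).fun_pow 2)
      (hprod.intervalIntegrable _ _)).symm
  have hle : ∫ t in y..z, 2 * u t * deriv u t ≤ energy u + energy (deriv u) := by
    calc
      _ ≤ ∫ t in y..z, (u t ^ 2 + deriv u t ^ 2) :=
        intervalIntegral.integral_mono hz.1 (hprod.intervalIntegrable _ _)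
          (Continuous.intervalIntegrable (by fun_prop) _ _) fun t => two_mul_le_add_sq _ _
      _ ≤ ∫ t in y..y + 2 * π, (u t ^ 2 + deriv u t ^ 2) :=
        intervalIntegral.integral_mono_interval le_rfl hz.1 hz.2.le
          (Eventually.of_forall fun t => by positivity)
          (Continuous.intervalIntegrable (by fun_prop) _ _)
      _ = ∫ t in 0..2 * π, (u t ^ 2 + deriv u t ^ 2) := by
        have hper : Function.Periodic (fun t => u t ^ 2 + deriv u t ^ 2) (2 * π) := fun t => by
          simp only [hu.periodic t, hu.deriv.periodic t]
        simpa using hper.intervalIntegral_add_eq y 0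
      _ = _ := integral_period_add (hc.pow 2) (hc'.pow 2)
  rw [hxz]
  linarith [energy_nonneg (deriv u)]

end SmoothPeriodic

section Wirtinger

theorem hasSum_sq_fourierCoeffOn_ofReal {u : ℝ → ℝ} (hu : Continuous u) :
    HasSum (fun n : ℤ => ‖fourierCoeffOn two_pi_pos (fun x => (u x : ℂ)) n‖ ^ 2)
      ((2 * π)⁻¹ * energy u) := by
  have hc : Continuous fun x => (u x : ℂ) := Complex.continuous_ofReal.comp hu
  simpa [energy] using hasSum_sq_fourierCoeffOn two_pi_pos
    ((MeasureTheory.memLp_two_iff_integrable_sq_norm hc.aestronglyMeasurable).2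
      (hc.norm.pow 2).integrableOn_Ioc)

theorem norm_sq_fourierCoeffOn_ofReal {u : ℝ → ℝ} (hu : Continuous u) (n : ℤ) :
    ‖fourierCoeffOn two_pi_pos (fun x => (u x : ℂ)) n‖ ^ 2 =
      (2 * π)⁻¹ ^ 2 * ((∫ x in 0..2 * π, u x * cos (n * x)) ^ 2 +
        (∫ x in 0..2 * π, u x * sin (n * x)) ^ 2) := by
  have hsplit : ∫ x in 0..2 * π, (fourier (-n) (x : AddCircle (2 * π - 0))) • (u x : ℂ) =
      ((∫ x in 0..2 * π, u x * cos (n * x) : ℝ) : ℂ) -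
        ((∫ x in 0..2 * π, u x * sin (n * x) : ℝ) : ℂ) * Complex.I := by
    rw [← intervalIntegral.integral_ofReal, ← intervalIntegral.integral_ofReal,
      ← intervalIntegral.integral_mul_const, ← intervalIntegral.integral_sub
        (Continuous.intervalIntegrable (by fun_prop) _ _)
        (Continuous.intervalIntegrable (by fun_prop) _ _)]
    refine intervalIntegral.integral_congr fun x _ => ?_
    have hexp : 2 * (π : ℂ) * Complex.I * ((-n : ℤ) : ℂ) * (x : ℂ) / ((2 * π - 0 : ℝ) : ℂ) =
        ((-(n * x) : ℝ) : ℂ) * Complex.I := by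
      have : (π : ℂ) ≠ 0 := by exact_mod_cast pi_ne_zero
      push_cast
      field_simp
      ring
    simp only [fourier_coe_apply, smul_eq_mul]
    rw [hexp, Complex.exp_mul_I, ← Complex.ofReal_cos, ← Complex.ofReal_sin, cos_neg, sin_neg]
    push_cast
    ring
  rw [fourierCoeffOn_eq_integral, hsplit, norm_smul, mul_pow, ← Complex.normSq_eq_norm_sq,
    Complex.normSq_apply]
  simp [abs_of_pos pi_pos]
  ring

namespace SmoothPeriodic

variable {u : ℝ → ℝ}

theorem norm_sq_fourierCoeffOn_deriv (hu : SmoothPeriodic u) {n : ℤ} (hn : n ≠ 0) :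
    ‖fourierCoeffOn two_pi_pos (fun x => ((deriv u x : ℝ) : ℂ)) n‖ ^ 2 =
      (n : ℝ) ^ 2 * ‖fourierCoeffOn two_pi_pos (fun x => (u x : ℂ)) n‖ ^ 2 := by
  rw [fourierCoeffOn_of_hasDerivAt two_pi_pos (f := fun x => (u x : ℂ))
    (f' := fun x => ((deriv u x : ℝ) : ℂ)) hn (fun x _ => (hu.hasDerivAt x).ofReal_comp)
    ((Complex.continuous_ofReal.comp hu.deriv.continuous).intervalIntegrable _ _),
    hu.periodic.eq]
  have hn' : (n : ℝ) ≠ 0 := Int.cast_ne_zero.2 hn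
  simp [mul_pow, abs_of_pos pi_pos]
  field_simp

theorem energy_le_energy_deriv (hu : SmoothPeriodic u) (h0 : ∫ x in 0..2 * π, u x = 0) :
    energy u ≤ energy (deriv u) := by
  have h := hasSum_le (fun n => ?_) (hasSum_sq_fourierCoeffOn_ofReal hu.continuous)
    (hasSum_sq_fourierCoeffOn_ofReal hu.deriv.continuous)
  · exact le_of_mul_le_mul_left h (by positivity)
  rcases eq_or_ne n 0 with rfl | hn
  · simp [norm_sq_fourierCoeffOn_ofReal hu.continuous, h0]
  · rw [hu.norm_sq_fourierCoeffOn_deriv hn]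
    have hn1 : (1 : ℤ) ≤ n ^ 2 := Order.one_le_iff_pos.2 (sq_pos_of_ne_zero hn)
    exact le_mul_of_one_le_left (by positivity) (mod_cast hn1)

theorem four_mul_energy_le (hu : SmoothPeriodic u) (h0 : ∫ x in 0..2 * π, u x = 0) :
    4 * energy u - 3 / π * ((∫ x in 0..2 * π, u x * cos x) ^ 2 +
        (∫ x in 0..2 * π, u x * sin x) ^ 2) ≤ energy (deriv u) := by
  set Q := (∫ x in 0..2 * π, u x * cos x) ^ 2 + (∫ x in 0..2 * π, u x * sin x) ^ 2 with hQ
  set c := fun n : ℤ => ‖fourierCoeffOn two_pi_pos (fun x => (u x : ℂ)) n‖ ^ 2 with hc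
  have hsum := (((hasSum_sq_fourierCoeffOn_ofReal hu.continuous).mul_left 4).sub
    (hasSum_ite_eq (1 : ℤ) (3 * c 1))).sub (hasSum_ite_eq (-1 : ℤ) (3 * c (-1)))
  have h := hasSum_le (fun n => ?_) hsum (hasSum_sq_fourierCoeffOn_ofReal hu.deriv.continuous)
  · have hc1 : c 1 = (2 * π)⁻¹ ^ 2 * Q := by
      simp [hc, norm_sq_fourierCoeffOn_ofReal hu.continuous, hQ]
    have hc1' : c (-1) = (2 * π)⁻¹ ^ 2 * Q := by
      simp [hc, norm_sq_fourierCoeffOn_ofReal hu.continuous, hQ, intervalIntegral.integral_neg]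
    rw [hc1, hc1'] at h
    calc
      _ = 2 * π * (4 * ((2 * π)⁻¹ * energy u) - 3 * ((2 * π)⁻¹ ^ 2 * Q) -
          3 * ((2 * π)⁻¹ ^ 2 * Q)) := by field_simp; ring
      _ ≤ 2 * π * ((2 * π)⁻¹ * energy (deriv u)) := by gcongr
      _ = energy (deriv u) := by field_simp
  rcases eq_or_ne n 0 with rfl | hn
  · simp [norm_sq_fourierCoeffOn_ofReal hu.continuous, h0]
  rw [hu.norm_sq_fourierCoeffOn_deriv hn]
  obtain rfl | rfl | h2 : n = 1 ∨ n = -1 ∨ 2 ≤ |n| := by grind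
  · norm_num [hc]; linarith
  · norm_num [hc]; linarith
  · have h4 : (4 : ℝ) ≤ (n : ℝ) ^ 2 := by
      have : (4 : ℤ) ≤ n ^ 2 := by rw [← sq_abs]; nlinarith
      exact_mod_cast this
    rw [if_neg (by grind), if_neg (by grind), sub_zero, sub_zero]
    gcongr

theorem energy_deriv_le (hu : SmoothPeriodic u) : energy (deriv u) ≤ energy (deriv (deriv u)) :=
  hu.deriv.energy_le_energy_deriv hu.integral_deriv

theorem energy_iteratedDeriv_mono (hu : SmoothPeriodic u) {m n : ℕ} (hm : 1 ≤ m) (hmn : m ≤ n) :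
    energy (iteratedDeriv m u) ≤ energy (iteratedDeriv n u) := by
  induction n, hmn using Nat.le_induction with
  | base => exact le_rfl
  | succ n hn ih =>
    obtain ⟨k, rfl⟩ := Nat.exists_eq_add_of_le' (hm.trans hn)
    refine ih.trans ?_
    simpa only [iteratedDeriv_succ] using (hu.iteratedDeriv k).energy_deriv_le

theorem energy_deriv_interpolation (hu : SmoothPeriodic u) {ε : ℝ} (hε : 0 < ε) :
    energy (deriv u) ≤ ε * energy (deriv (deriv u)) + 1 / (4 * ε) * energy u := by
  have hc : Continuous u := hu.continuous
  have hc'' : Continuous (deriv (deriv u)) := hu.deriv.deriv.continuous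
  calc
    energy (deriv u) = ∫ x in 0..2 * π, -(u x * deriv (deriv u) x) := by
      rw [intervalIntegral.integral_neg, hu.integral_mul_deriv hu.deriv, neg_neg]
      simp only [energy, sq]
    _ ≤ _ := integral_period_le_linear (by fun_prop) (by fun_prop) (by fun_prop) _ _ fun x => by
      have : 0 ≤ ε * (deriv (deriv u) x + u x / (2 * ε)) ^ 2 := by positivity
      have : ε * deriv (deriv u) x ^ 2 + 1 / (4 * ε) * u x ^ 2 + u x * deriv (deriv u) x =
        ε * (deriv (deriv u) x + u x / (2 * ε)) ^ 2 := by field_simp; ring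
      linarith

end SmoothPeriodic

end Wirtinger

section Sobolev

/-- The derivatives of `u` of order at most `n` have energy at most `A`: a bound on the `Hⁿ` norm
of `u`. -/
def SobolevBound (u : ℝ → ℝ) (n : ℕ) (A : ℝ) : Prop := ∀ j ≤ n, energy (iteratedDeriv j u) ≤ A

variable {u v : ℝ → ℝ} {m n : ℕ} {A B : ℝ}

theorem SmoothPeriodic.sobolevBound_deriv (hu : SmoothPeriodic u) (n : ℕ) :
    SobolevBound (deriv u) n (energy (iteratedDeriv (n + 1) u)) := fun j hj => by
  rw [← iteratedDeriv_succ']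
  exact hu.energy_iteratedDeriv_mono (by omega) (by omega)

namespace SobolevBound

theorem energy_le (h : SobolevBound u n A) : energy u ≤ A := by simpa using h 0 n.zero_le

protected theorem nonneg (h : SobolevBound u n A) : 0 ≤ A := (energy_nonneg u).trans h.energy_le

protected theorem mono (h : SobolevBound u n A) (hm : m ≤ n) : SobolevBound u m A :=
  fun j hj => h j (hj.trans hm)

protected theorem mono_right (h : SobolevBound u n A) (hB : A ≤ B) : SobolevBound u n B :=
  fun j hj => (h j hj).trans hB

protected theorem deriv (h : SobolevBound u (n + 1) A) : SobolevBound (deriv u) n A := by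
  intro j hj
  rw [← iteratedDeriv_succ']
  exact h (j + 1) (by omega)

theorem of_deriv (h0 : energy u ≤ A) (h : SobolevBound (deriv u) n A) :
    SobolevBound u (n + 1) A
  | 0, _ => by simpa using h0
  | j + 1, hj => by rw [iteratedDeriv_succ']; exact h j (by omega)

protected theorem add (hu : SmoothPeriodic u) (hv : SmoothPeriodic v) (hA : SobolevBound u n A)
    (hB : SobolevBound v n B) : SobolevBound (fun x => u x + v x) n (2 * A + 2 * B) := by
  intro j hj
  have hadd : iteratedDeriv j (fun x => u x + v x) =
      fun x => iteratedDeriv j u x + iteratedDeriv j v x := funext fun x =>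
    iteratedDeriv_fun_add (hu.contDiff.contDiffAt.of_le (mod_cast le_top))
      (hv.contDiff.contDiffAt.of_le (mod_cast le_top))
  rw [hadd]
  have := energy_add_le (hu.iteratedDeriv j).continuous (hv.iteratedDeriv j).continuous
  linarith [hA j hj, hB j hj]

theorem sq_le (hu : SmoothPeriodic u) (hA : SobolevBound u 1 A) (x : ℝ) : u x ^ 2 ≤ 4 * A := by
  have h1 := hA 1 le_rfl
  rw [iteratedDeriv_one] at h1
  linarith [hu.sq_le x, hA.energy_le]

protected theorem energy_mul_le (hu : SmoothPeriodic u) (hv : SmoothPeriodic v)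
    (hA : SobolevBound u 1 A) (hB : SobolevBound v n B) :
    energy (fun x => u x * v x) ≤ 4 * A * B :=
  (energy_mul_le hu.continuous hv.continuous (hA.sq_le hu)).trans
    (mul_le_mul_of_nonneg_left hB.energy_le (by linarith [hA.nonneg]))

theorem mul_of_succ (hu : SmoothPeriodic u) (hv : SmoothPeriodic v)
    (hA : SobolevBound u (n + 1) A) (hB : SobolevBound v n B) :
    SobolevBound (fun x => u x * v x) n (4 ^ (n + 1) * A * B) := by
  induction n generalizing u v with
  | zero => intro j hj; simpa [Nat.le_zero.1 hj] using SobolevBound.energy_mul_le hu hv hA hB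
  | succ n ih =>
    have hA0 := hA.nonneg
    have hB0 := hB.nonneg
    refine of_deriv ((SobolevBound.energy_mul_le hu hv (hA.mono (by omega)) hB).trans ?_) ?_
    · gcongr
      exact le_self_pow₀ (by norm_num) (by omega)
    · have hu'v := ih hu.deriv hv hA.deriv (hB.mono n.le_succ)
      have huv' := ih hu hv.deriv (hA.mono (by omega)) hB.deriv
      rw [hu.deriv_mul hv]
      exact (hu'v.add (hu.deriv.mul hv) (hu.mul hv.deriv) huv').mono_right
        (by rw [pow_succ 4 (n + 1)]; linarith)

protected theorem mul (hu : SmoothPeriodic u) (hv : SmoothPeriodic v)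
    (hA : SobolevBound u (n + 1) A) (hB : SobolevBound v (n + 1) B) :
    SobolevBound (fun x => u x * v x) (n + 1) (4 ^ (n + 2) * A * B) := by
  have hA0 := hA.nonneg
  have hB0 := hB.nonneg
  refine of_deriv ((SobolevBound.energy_mul_le hu hv (hA.mono (by omega)) hB).trans ?_) ?_
  · gcongr
    exact le_self_pow₀ (by norm_num) (by omega)
  · have hu'v : SobolevBound (fun x => deriv u x * v x) n (4 ^ (n + 1) * B * A) := by
      simpa only [mul_comm (v _)] using mul_of_succ hv hu.deriv hB hA.deriv
    have huv' := mul_of_succ hu hv.deriv hA hB.deriv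
    rw [hu.deriv_mul hv]
    exact (hu'v.add (hu.deriv.mul hv) (hu.mul hv.deriv) huv').mono_right
      (by rw [pow_succ 4 (n + 1)]; linarith)

end SobolevBound

/-- The commutator of the `n`-th derivative with multiplication by `a`, applied to `w`. -/
noncomputable def derivCommutator (n : ℕ) (a w : ℝ → ℝ) (x : ℝ) : ℝ :=
  iteratedDeriv n (fun y => a y * w y) x - a x * iteratedDeriv n w x

variable {a w : ℝ → ℝ}

protected theorem SmoothPeriodic.derivCommutator (ha : SmoothPeriodic a) (hw : SmoothPeriodic w)
    (n : ℕ) : SmoothPeriodic (derivCommutator n a w) :=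
  ((ha.mul hw).iteratedDeriv n).sub (ha.mul (hw.iteratedDeriv n))

theorem derivCommutator_zero (a w : ℝ → ℝ) : derivCommutator 0 a w = fun _ => 0 := by
  funext x
  simp [derivCommutator]

theorem derivCommutator_succ (ha : SmoothPeriodic a) (hw : SmoothPeriodic w) (n : ℕ) :
    derivCommutator (n + 1) a w = fun x =>
      iteratedDeriv n (fun y => deriv a y * w y) x + derivCommutator n a (deriv w) x := by
  funext x
  rw [derivCommutator, derivCommutator, iteratedDeriv_succ', iteratedDeriv_succ', ha.deriv_mul hw,
    iteratedDeriv_fun_add ((ha.deriv.mul hw).contDiff.contDiffAt.of_le (mod_cast le_top))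
      ((ha.mul hw.deriv).contDiff.contDiffAt.of_le (mod_cast le_top))]
  ring

theorem derivCommutator_one (ha : SmoothPeriodic a) (hw : SmoothPeriodic w) :
    derivCommutator 1 a w = fun x => deriv a x * w x := by
  simp [derivCommutator_succ ha hw, derivCommutator_zero]

theorem exists_energy_derivCommutator_le (n : ℕ) : ∃ D : ℝ, ∀ {a w : ℝ → ℝ} {A W : ℝ},
    SmoothPeriodic a → SmoothPeriodic w → (∀ x, deriv a x ^ 2 ≤ A) →
    SobolevBound (deriv a) n A → SobolevBound w n W →
    energy (derivCommutator (n + 1) a w) ≤ D * A * W := by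
  induction n with
  | zero =>
    refine ⟨1, fun ha hw hsup hA hW => ?_⟩
    rw [derivCommutator_one ha hw, one_mul]
    exact (energy_mul_le ha.deriv.continuous hw.continuous hsup).trans
      (mul_le_mul_of_nonneg_left hW.energy_le hA.nonneg)
  | succ n ih =>
    obtain ⟨D, hD⟩ := ih
    refine ⟨2 * 4 ^ (n + 2) + 2 * D, fun ha hw hsup hA hW => ?_⟩
    have hprod := SobolevBound.mul ha.deriv hw hA hW (n + 1) le_rfl
    have hcomm := hD ha hw.deriv hsup (hA.mono n.le_succ) hW.deriv
    rw [derivCommutator_succ ha hw]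
    refine (energy_add_le ((ha.deriv.mul hw).iteratedDeriv _).continuous
      (ha.derivCommutator hw.deriv _).continuous).trans ?_
    linarith

end Sobolev

section Composition

variable {f : ℝ → ℝ} {U k : Set ℝ}

theorem contDiffOn_deriv (hf : ContDiffOn ℝ ∞ f U) (hU : IsOpen U) : ContDiffOn ℝ ∞ (deriv f) U :=
  ((contDiffOn_infty_iff_deriv_of_isOpen hU).1 hf).2

theorem exists_sq_le_of_isCompact (hf : ContinuousOn f U) (hk : IsCompact k) (hkU : k ⊆ U) :
    ∃ M, ∀ y ∈ k, f y ^ 2 ≤ M := by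
  obtain ⟨M, hM⟩ := hk.exists_bound_of_continuousOn (hf.mono hkU)
  exact ⟨M ^ 2, fun y hy => sq_le_sq' (abs_le.1 (hM y hy)).1 (abs_le.1 (hM y hy)).2⟩

theorem exists_sobolevBound_comp (hU : IsOpen U) (hf : ContDiffOn ℝ ∞ f U) (hk : IsCompact k)
    (hkU : k ⊆ U) (n : ℕ) (B : ℝ) : ∃ C, ∀ {v : ℝ → ℝ}, SmoothPeriodic v → (∀ x, v x ∈ k) →
      SobolevBound (deriv v) n B → SobolevBound (fun x => f (v x)) (n + 1) C := by
  induction n generalizing f with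
  | zero =>
    obtain ⟨M, hM⟩ := exists_sq_le_of_isCompact hf.continuousOn hk hkU
    obtain ⟨M', hM'⟩ := exists_sq_le_of_isCompact (contDiffOn_deriv hf hU).continuousOn hk hkU
    refine ⟨max (2 * π * M) (M' * B), fun {v} hv hvk hB => ?_⟩
    have hvU x : v x ∈ U := hkU (hvk x)
    have hM'0 : 0 ≤ M' := (sq_nonneg _).trans (hM' _ (hvk 0))
    refine .of_deriv (le_max_of_le_left ?_) fun j hj => le_max_of_le_right ?_
    · exact energy_le_of_sq_le (hv.comp hf hvU).continuous fun x => hM _ (hvk x)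
    · rw [Nat.le_zero.1 hj, iteratedDeriv_zero, hv.deriv_comp hU hf hvU]
      exact (energy_mul_le (hv.comp (contDiffOn_deriv hf hU) hvU).continuous hv.deriv.continuous
        fun x => hM' _ (hvk x)).trans (mul_le_mul_of_nonneg_left hB.energy_le hM'0)
  | succ n ih =>
    obtain ⟨C, hC⟩ := ih hf
    obtain ⟨C', hC'⟩ := ih (contDiffOn_deriv hf hU)
    refine ⟨max C (4 ^ (n + 2) * C' * B), fun {v} hv hvk hB => ?_⟩
    have hvU x : v x ∈ U := hkU (hvk x)
    have hBn := hB.mono n.le_succ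
    refine .of_deriv (le_max_of_le_left (hC hv hvk hBn).energy_le) ?_
    rw [hv.deriv_comp hU hf hvU]
    exact (SobolevBound.mul (hv.comp (contDiffOn_deriv hf hU) hvU) hv.deriv (hC' hv hvk hBn)
      hB).mono_right (le_max_right _ _)

end Composition

/-- The spatial operator `v ↦ a(v) v'' + r(v)` of a quasilinear diffusion equation. -/
noncomputable def quasilinearOp (a r v : ℝ → ℝ) (x : ℝ) : ℝ :=
  a (v x) * deriv (deriv v) x + r (v x)

section HigherOrder

variable {a r v : ℝ → ℝ} {U k : Set ℝ}

protected theorem SmoothPeriodic.quasilinearOp (hv : SmoothPeriodic v) (ha : ContDiffOn ℝ ∞ a U)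
    (hr : ContDiffOn ℝ ∞ r U) (hvU : ∀ x, v x ∈ U) : SmoothPeriodic (quasilinearOp a r v) :=
  ((hv.comp ha hvU).mul hv.deriv.deriv).add (hv.comp hr hvU)

theorem iteratedDeriv_quasilinearOp (hv : SmoothPeriodic v) (ha : ContDiffOn ℝ ∞ a U)
    (hr : ContDiffOn ℝ ∞ r U) (hvU : ∀ x, v x ∈ U) (n : ℕ) :
    iteratedDeriv n (quasilinearOp a r v) = fun x => a (v x) * iteratedDeriv (n + 2) v x +
      (derivCommutator n (fun x => a (v x)) (deriv (deriv v)) x +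
        iteratedDeriv n (fun x => r (v x)) x) := by
  funext x
  have hadd := iteratedDeriv_fun_add (n := n) (x := x)
    (((hv.comp ha hvU).mul hv.deriv.deriv).contDiff.contDiffAt.of_le (mod_cast le_top))
    ((hv.comp hr hvU).contDiff.contDiffAt.of_le (mod_cast le_top))
  rw [show quasilinearOp a r v = fun x => a (v x) * deriv (deriv v) x + r (v x) from rfl, hadd,
    derivCommutator, iteratedDeriv_succ', iteratedDeriv_succ']
  ring

theorem neg_integral_mul_le {α f g : ℝ → ℝ} (hα : Continuous α) (hf : Continuous f)
    (hg : Continuous g) {a₀ : ℝ} (ha₀ : 0 < a₀) (h : ∀ x, a₀ ≤ α x) :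
    -∫ x in 0..2 * π, f x * (α x * f x + g x) ≤
      -(a₀ / 2) * energy f + 1 / (2 * a₀) * energy g := by
  rw [← intervalIntegral.integral_neg]
  refine integral_period_le_linear (by fun_prop) (by fun_prop) (by fun_prop) _ _ fun x => ?_
  have hsq : -(a₀ / 2) * f x ^ 2 + 1 / (2 * a₀) * g x ^ 2 + (a₀ * f x ^ 2 + f x * g x) =
      1 / (2 * a₀) * (a₀ * f x + g x) ^ 2 := by field_simp; ring
  have hsq0 : 0 ≤ 1 / (2 * a₀) * (a₀ * f x + g x) ^ 2 := by positivity
  nlinarith [mul_le_mul_of_nonneg_right (h x) (sq_nonneg (f x))]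

theorem exists_energy_iteratedDeriv_comp_le (hU : IsOpen U) (hr : ContDiffOn ℝ ∞ r U)
    (hk : IsCompact k) (hkU : k ⊆ U) (n : ℕ) (B : ℝ) : ∃ C, ∀ {v : ℝ → ℝ}, SmoothPeriodic v →
      (∀ x, v x ∈ k) → SobolevBound (deriv v) n B →
      energy (iteratedDeriv (n + 1) (fun x => r (v x))) ≤ C * energy (iteratedDeriv (n + 1) v) := by
  obtain ⟨C, hC⟩ := exists_sobolevBound_comp hU (contDiffOn_deriv hr hU) hk hkU n B
  refine ⟨4 ^ (n + 1) * C, fun {v} hv hvk hB => ?_⟩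
  have hvU x : v x ∈ U := hkU (hvk x)
  rw [iteratedDeriv_succ', hv.deriv_comp hU hr hvU]
  exact SobolevBound.mul_of_succ (hv.comp (contDiffOn_deriv hr hU) hvU) hv.deriv (hC hv hvk hB)
    (hv.sobolevBound_deriv n) n le_rfl

-- The commutator of order one is the top-order term `a'(v) v' v''`: it is not of lower order, but
-- small because `v'` is.
theorem exists_energy_derivCommutator_one_le (hU : IsOpen U) (ha : ContDiffOn ℝ ∞ a U)
    (hk : IsCompact k) (hkU : k ⊆ U) (B : ℝ) {ε : ℝ} (hε : 0 < ε) :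
    ∃ η > 0, ∀ {v : ℝ → ℝ}, SmoothPeriodic v → (∀ x, v x ∈ k) → energy (deriv v) ≤ η →
      SobolevBound (deriv v) 0 B →
      energy (derivCommutator 1 (fun x => a (v x)) (deriv (deriv v))) ≤
        ε * energy (iteratedDeriv 3 v) := by
  obtain ⟨C, hC⟩ := exists_energy_iteratedDeriv_comp_le hU ha hk hkU 0 B
  refine ⟨ε / (4 * (|C| + 1)), by positivity, fun {v} hv hvk hη hB => ?_⟩
  have hav := hv.comp ha fun x => hkU (hvk x)
  have hsup (x : ℝ) : deriv (deriv v) x ^ 2 ≤ 4 * energy (iteratedDeriv 3 v) :=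
    SobolevBound.sq_le hv.deriv.deriv (by
      simpa only [iteratedDeriv_succ'] using hv.deriv.sobolevBound_deriv 1) x
  have hE : energy (deriv fun x => a (v x)) ≤ ε / 4 := calc
    _ ≤ C * energy (deriv v) := by simpa using hC hv hvk hB
    _ ≤ (|C| + 1) * (ε / (4 * (|C| + 1))) := by
      have := energy_nonneg (deriv v)
      gcongr
      linarith [le_abs_self C]
    _ = ε / 4 := by field_simp
  rw [derivCommutator_one hav hv.deriv.deriv]
  rw [funext fun x => mul_comm (deriv (fun y => a (v y)) x) (deriv (deriv v) x)]
  refine (energy_mul_le hv.deriv.deriv.continuous hav.deriv.continuous hsup).trans ?_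
  nlinarith [energy_nonneg (iteratedDeriv 3 v)]

theorem exists_energy_derivCommutator_comp_le (hU : IsOpen U) (ha : ContDiffOn ℝ ∞ a U)
    (hk : IsCompact k) (hkU : k ⊆ U) (n : ℕ) (B : ℝ) {ε : ℝ} (hε : 0 < ε) :
    ∃ η > 0, ∃ C, ∀ {v : ℝ → ℝ}, SmoothPeriodic v → (∀ x, v x ∈ k) → energy (deriv v) ≤ η →
      SobolevBound (deriv v) n B →
      energy (derivCommutator (n + 1) (fun x => a (v x)) (deriv (deriv v))) ≤
        ε * energy (iteratedDeriv (n + 3) v) + C * energy (iteratedDeriv (n + 2) v) := by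
  rcases n with _ | n
  · obtain ⟨η, hη, h⟩ := exists_energy_derivCommutator_one_le hU ha hk hkU B hε
    exact ⟨η, hη, 0, fun hv hvk hvη hB => by simpa using h hv hvk hvη hB⟩
  obtain ⟨C, hC⟩ := exists_sobolevBound_comp hU ha hk hkU (n + 1) B
  obtain ⟨D, hD⟩ := exists_energy_derivCommutator_le (n + 1)
  refine ⟨1, one_pos, D * (4 * C), fun {v} hv hvk _ hB => ?_⟩
  have hav := hv.comp ha fun x => hkU (hvk x)
  have hbound := (hC hv hvk hB).deriv
  have hw : SobolevBound (deriv (deriv v)) (n + 1) (energy (iteratedDeriv (n + 3) v)) := by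
    rw [iteratedDeriv_succ']
    exact hv.deriv.sobolevBound_deriv (n + 1)
  refine (hD hav hv.deriv.deriv (fun x => (hbound.mono (by omega)).sq_le hav.deriv x)
    (hbound.mono_right (by linarith [hbound.nonneg])) hw).trans
    (le_add_of_nonneg_left (mul_nonneg hε.le (energy_nonneg _)))

theorem exists_integral_iteratedDeriv_mul_quasilinearOp_le (hU : IsOpen U)
    (ha : ContDiffOn ℝ ∞ a U) (hr : ContDiffOn ℝ ∞ r U) (hk : IsCompact k) (hkU : k ⊆ U)
    (ha_pos : ∀ y ∈ k, 0 < a y) (n : ℕ) (B : ℝ) :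
    ∃ κ > 0, ∃ η > 0, ∃ C, ∀ {v : ℝ → ℝ}, SmoothPeriodic v → (∀ x, v x ∈ k) →
      energy (deriv v) ≤ η → SobolevBound (deriv v) n B →
      ∫ x in 0..2 * π, iteratedDeriv (n + 2) v x * iteratedDeriv (n + 2) (quasilinearOp a r v) x ≤
        -κ * energy (iteratedDeriv (n + 3) v) + C * energy (iteratedDeriv (n + 2) v) := by
  obtain ⟨a₀, ha₀, hle⟩ := hk.exists_forall_le' (ha.continuousOn.mono hkU) ha_pos
  obtain ⟨η, hη, C₁, hC₁⟩ := exists_energy_derivCommutator_comp_le hU ha hk hkU n B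
    (ε := a₀ ^ 2 / 4) (by positivity)
  obtain ⟨C₂, hC₂⟩ := exists_energy_iteratedDeriv_comp_le hU hr hk hkU n B
  refine ⟨a₀ / 4, by positivity, η, hη, (C₁ + |C₂|) / a₀, fun {v} hv hvk hvη hB => ?_⟩
  have hvU x : v x ∈ U := hkU (hvk x)
  have hav := hv.comp ha hvU
  have hcomm := hav.derivCommutator hv.deriv.deriv (n + 1)
  have hrv := (hv.comp hr hvU).iteratedDeriv (n + 1)
  have hparts : ∫ x in 0..2 * π,
      iteratedDeriv (n + 2) v x * iteratedDeriv (n + 2) (quasilinearOp a r v) x =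
      -∫ x in 0..2 * π,
        iteratedDeriv (n + 3) v x * iteratedDeriv (n + 1) (quasilinearOp a r v) x := by
    simpa only [← iteratedDeriv_succ] using (hv.iteratedDeriv (n + 2)).integral_mul_deriv
      ((hv.quasilinearOp ha hr hvU).iteratedDeriv (n + 1))
  have hreac : energy (iteratedDeriv (n + 1) fun x => r (v x)) ≤
      |C₂| * energy (iteratedDeriv (n + 2) v) :=
    (hC₂ hv hvk hB).trans (mul_le_mul (le_abs_self _)
      (hv.energy_iteratedDeriv_mono (by omega) (by omega)) (energy_nonneg _) (abs_nonneg _))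
  have hlower := (energy_add_le hcomm.continuous hrv.continuous).trans
    (add_le_add (mul_le_mul_of_nonneg_left (hC₁ hv hvk hvη hB) zero_le_two)
      (mul_le_mul_of_nonneg_left hreac zero_le_two))
  rw [hparts, iteratedDeriv_quasilinearOp hv ha hr hvU]
  refine (neg_integral_mul_le hav.continuous (hv.iteratedDeriv (n + 3)).continuous
    (hcomm.add hrv).continuous ha₀ fun x => hle _ (hvk x)).trans ?_
  refine (add_le_add_right (mul_le_mul_of_nonneg_left hlower (by positivity)) _).trans_eq ?_
  field_simp
  ring

/-- Interpolation turns the coercivity of the operator into an arbitrarily fast decay rate, at the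
expense of one derivative less. -/
theorem exists_integral_iteratedDeriv_mul_quasilinearOp_le_of_rate (hU : IsOpen U)
    (ha : ContDiffOn ℝ ∞ a U) (hr : ContDiffOn ℝ ∞ r U) (hk : IsCompact k) (hkU : k ⊆ U)
    (ha_pos : ∀ y ∈ k, 0 < a y) (n : ℕ) (A B : ℝ) :
    ∃ η > 0, ∃ C, ∀ {v : ℝ → ℝ}, SmoothPeriodic v → (∀ x, v x ∈ k) → energy (deriv v) ≤ η →
      SobolevBound (deriv v) n B →
      ∫ x in 0..2 * π, iteratedDeriv (n + 2) v x * iteratedDeriv (n + 2) (quasilinearOp a r v) x ≤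
        -A * energy (iteratedDeriv (n + 2) v) + C * energy (iteratedDeriv (n + 1) v) := by
  obtain ⟨κ, hκ, η, hη, C, hC⟩ :=
    exists_integral_iteratedDeriv_mul_quasilinearOp_le hU ha hr hk hkU ha_pos n B
  set M := |A + C| + 1
  have hM : 0 < M := by positivity
  refine ⟨η, hη, M ^ 2 / (4 * κ), fun {v} hv hvk hvη hB => (hC hv hvk hvη hB).trans ?_⟩
  have hinterp := (hv.iteratedDeriv (n + 1)).energy_deriv_interpolation (ε := κ / M) (by positivity)
  rw [← iteratedDeriv_succ, ← iteratedDeriv_succ] at hinterp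
  calc
    _ ≤ -κ * energy (iteratedDeriv (n + 3) v) + (M - A) * energy (iteratedDeriv (n + 2) v) := by
      have := energy_nonneg (iteratedDeriv (n + 2) v)
      gcongr
      linarith [le_abs_self (A + C)]
    _ ≤ -κ * energy (iteratedDeriv (n + 3) v) - A * energy (iteratedDeriv (n + 2) v) +
        M * (κ / M * energy (iteratedDeriv (n + 3) v) +
          1 / (4 * (κ / M)) * energy (iteratedDeriv (n + 1) v)) := by
      linarith [mul_le_mul_of_nonneg_left hinterp hM.le]
    _ = _ := by field_simp; ring

end HigherOrder

section LinearRate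

variable {a r g v : ℝ → ℝ} {U : Set ℝ} {c ε : ℝ}

theorem integral_deriv_mul_deriv_quasilinearOp (hU : IsOpen U) (ha : ContDiffOn ℝ ∞ a U)
    (hr : ContDiffOn ℝ ∞ r U) (hv : SmoothPeriodic v) (hvU : ∀ x, v x ∈ U) :
    ∫ x in 0..2 * π, deriv v x * deriv (quasilinearOp a r v) x =
      -(∫ x in 0..2 * π, a (v x) * deriv (deriv v) x ^ 2) +
        ∫ x in 0..2 * π, deriv r (v x) * deriv v x ^ 2 := by
  have hdiff := (hv.comp ha hvU).mul hv.deriv.deriv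
  have hreac := hv.comp hr hvU
  calc
    _ = (∫ x in 0..2 * π, deriv v x * deriv (fun y => a (v y) * deriv (deriv v) y) x) +
        ∫ x in 0..2 * π, deriv r (v x) * deriv v x ^ 2 := by
      have hsq : Continuous fun x => deriv r (v x) * deriv v x ^ 2 :=
        (hv.comp (contDiffOn_deriv hr hU) hvU).continuous.mul (hv.deriv.continuous.pow 2)
      rw [← integral_period_add (hv.deriv.mul hdiff.deriv).continuous hsq]
      refine intervalIntegral.integral_congr fun x _ => ?_
      have hadd : deriv (quasilinearOp a r v) x = _ :=
        deriv_fun_add hdiff.differentiableAt hreac.differentiableAt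
      simp only [hadd, hv.deriv_comp hU hr hvU]
      ring
    _ = _ := by
      rw [hv.deriv.integral_mul_deriv hdiff]
      congr 2
      exact intervalIntegral.integral_congr fun x _ => by ring

theorem integral_deriv_mul_deriv_quasilinearOp_le (hU : IsOpen U) (ha : ContDiffOn ℝ ∞ a U)
    (hr : ContDiffOn ℝ ∞ r U) (hv : SmoothPeriodic v) (hvU : ∀ x, v x ∈ U) {α ρ : ℝ}
    (hα : ∀ x, α ≤ a (v x)) (hρ : ∀ x, deriv r (v x) ≤ ρ) :
    ∫ x in 0..2 * π, deriv v x * deriv (quasilinearOp a r v) x ≤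
      -α * energy (deriv (deriv v)) + ρ * energy (deriv v) := by
  have hc' := hv.deriv.continuous.pow 2
  have hc'' := hv.deriv.deriv.continuous.pow 2
  have hdiff : Continuous fun x => -(a (v x) * deriv (deriv v) x ^ 2) :=
    ((hv.comp ha hvU).continuous.mul hc'').neg
  have hreac : Continuous fun x => deriv r (v x) * deriv v x ^ 2 :=
    (hv.comp (contDiffOn_deriv hr hU) hvU).continuous.mul hc'
  rw [integral_deriv_mul_deriv_quasilinearOp hU ha hr hv hvU, ← intervalIntegral.integral_neg,
    ← integral_period_add hdiff hreac]
  refine integral_period_le_linear (hdiff.add hreac) hc'' hc' _ _ fun x => ?_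
  change -(a (v x) * deriv (deriv v) x ^ 2) + deriv r (v x) * deriv v x ^ 2 ≤
    -α * deriv (deriv v) x ^ 2 + ρ * deriv v x ^ 2
  nlinarith only [mul_le_mul_of_nonneg_right (hα x) (sq_nonneg (deriv (deriv v) x)),
    mul_le_mul_of_nonneg_right (hρ x) (sq_nonneg (deriv v x))]

/-- The pairing of `(g ∘ v)'` with `e` vanishes, and `v'` is close to `(g ∘ v)' / b`. -/
theorem sq_integral_deriv_mul_le (hU : IsOpen U) (hg : ContDiffOn ℝ ∞ g U)
    (hv : SmoothPeriodic v) (hvU : ∀ x, v x ∈ U) {e : ℝ → ℝ} (he : SmoothPeriodic e)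
    (hge : ∫ x in 0..2 * π, g (v x) * deriv e x = 0) {b : ℝ}
    (hε : ∀ x, (1 - deriv g (v x) / b) ^ 2 ≤ ε) :
    (∫ x in 0..2 * π, deriv v x * e x) ^ 2 ≤ ε * energy (deriv v) * energy e := by
  have hg' := (hv.comp (contDiffOn_deriv hg hU) hvU).continuous
  have hc := hv.deriv.continuous
  have hc' := he.continuous
  have hparts : ∫ x in 0..2 * π, deriv g (v x) * deriv v x * e x = 0 := by
    rw [(hv.comp hg hvU).integral_mul_deriv he, hv.deriv_comp hU hg hvU] at hge
    exact neg_eq_zero.1 hge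
  have hcorr : ∫ x in 0..2 * π, deriv v x * e x =
      ∫ x in 0..2 * π, (1 - deriv g (v x) / b) * deriv v x * e x := by
    calc
      _ = 1 * (∫ x in 0..2 * π, deriv v x * e x) +
          -(1 / b) * ∫ x in 0..2 * π, deriv g (v x) * deriv v x * e x := by rw [hparts]; ring
      _ = _ := by
        rw [← integral_period_linear (by fun_prop) (by fun_prop)]
        exact intervalIntegral.integral_congr fun x _ => by ring
  rw [hcorr]
  exact (sq_integral_mul_le_energy_mul_energy (by fun_prop) hc').trans
    (mul_le_mul_of_nonneg_right (energy_mul_le (by fun_prop) hc hε) (energy_nonneg e))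

theorem mul_energy_deriv_le_of_integral_eq_zero (hU : IsOpen U) (hg : ContDiffOn ℝ ∞ g U)
    (hv : SmoothPeriodic v) (hvU : ∀ x, v x ∈ U) (hcos : ∫ x in 0..2 * π, g (v x) * cos x = 0)
    (hsin : ∫ x in 0..2 * π, g (v x) * sin x = 0) {b : ℝ}
    (hε : ∀ x, (1 - deriv g (v x) / b) ^ 2 ≤ ε) :
    (4 - 6 * ε) * energy (deriv v) ≤ energy (deriv (deriv v)) := by
  have hC := sq_integral_deriv_mul_le hU hg hv hvU .cos
    (by simpa [intervalIntegral.integral_neg] using hsin) hε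
  have hS := sq_integral_deriv_mul_le hU hg hv hvU .sin (by simpa using hcos) hε
  rw [energy_cos] at hC
  rw [energy_sin] at hS
  have hW := hv.deriv.four_mul_energy_le hv.integral_deriv
  calc
    _ = 4 * energy (deriv v) -
        3 / π * (ε * energy (deriv v) * π + ε * energy (deriv v) * π) := by field_simp; ring
    _ ≤ _ := le_trans (by gcongr) hW

theorem exists_integral_deriv_mul_deriv_quasilinearOp_le (hU : IsOpen U) (hc : c ∈ U)
    (ha : ContDiffOn ℝ ∞ a U) (hr : ContDiffOn ℝ ∞ r U) (hg : ContDiffOn ℝ ∞ g U)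
    (hac : 0 < a c) (hgc : deriv g c ≠ 0) {μ : ℝ} (hμ : μ < 4 * a c - deriv r c) :
    ∃ δ > 0, ∀ {v : ℝ → ℝ}, SmoothPeriodic v → (∀ x, |v x - c| < δ) →
      ∫ x in 0..2 * π, g (v x) * cos x = 0 → ∫ x in 0..2 * π, g (v x) * sin x = 0 →
      ∫ x in 0..2 * π, deriv v x * deriv (quasilinearOp a r v) x ≤ -μ * energy (deriv v) := by
  obtain ⟨ε, hε0, hεa, hεμ⟩ : ∃ ε > 0, ε < a c ∧
      -(a c - ε) * (4 - 6 * ε) + (deriv r c + ε) < -μ := by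
    have hcont : Continuous fun ε => -(a c - ε) * (4 - 6 * ε) + (deriv r c + ε) := by fun_prop
    have hrate := (hcont.tendsto 0).eventually_lt_const (show _ < -μ by linarith)
    obtain ⟨ε, hεμ, hε⟩ :=
      ((hrate.filter_mono nhdsWithin_le_nhds).and (Ioo_mem_nhdsGT hac)).exists
    exact ⟨ε, hε.1, hε.2, hεμ⟩
  have hcont {f : ℝ → ℝ} (hf : ContDiffOn ℝ ∞ f U) : ContinuousAt f c :=
    hf.continuousOn.continuousAt (hU.mem_nhds hc)
  have hnear : ∀ᶠ y in 𝓝 c, y ∈ U ∧ a c - ε < a y ∧ deriv r y < deriv r c + ε ∧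
      (1 - deriv g y / deriv g c) ^ 2 < ε := by
    have hquot := ((continuousAt_const (y := (1 : ℝ))).sub
      ((hcont (contDiffOn_deriv hg hU)).div_const (deriv g c))).pow 2
    filter_upwards [hU.mem_nhds hc, (hcont ha).eventually_const_lt (sub_lt_self _ hε0),
      (hcont (contDiffOn_deriv hr hU)).eventually_lt_const (lt_add_of_pos_right _ hε0),
      hquot.eventually_lt_const (by simpa [hgc] using hε0)] with y hyU hya hyr hyg
    exact ⟨hyU, hya, hyr, hyg⟩
  obtain ⟨δ, hδ, hball⟩ := Metric.eventually_nhds_iff.1 hnear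
  refine ⟨δ, hδ, fun {v} hv hvδ hcos hsin => ?_⟩
  have hvc x := hball (hvδ x)
  have hvU x : v x ∈ U := (hvc x).1
  have hW := mul_energy_deriv_le_of_integral_eq_zero hU hg hv hvU hcos hsin
    fun x => (hvc x).2.2.2.le
  refine (integral_deriv_mul_deriv_quasilinearOp_le hU ha hr hv hvU (fun x => (hvc x).2.1.le)
    fun x => (hvc x).2.2.1.le).trans ?_
  nlinarith only [mul_le_mul_of_nonneg_left hW (sub_pos.2 hεa).le,
    mul_le_mul_of_nonneg_right hεμ.le (energy_nonneg (deriv v))]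

end LinearRate

/-- Joint smoothness in space and time, up to the initial time `0`. -/
def SmoothOnHalfPlane (F : ℝ → ℝ → ℝ) : Prop :=
  ContDiffOn ℝ ∞ (fun q : ℝ × ℝ => F q.1 q.2) (univ ×ˢ Ici 0)

namespace SmoothOnHalfPlane

variable {F : ℝ → ℝ → ℝ}

theorem contDiff_slice (hF : SmoothOnHalfPlane F) {s : ℝ} (hs : 0 ≤ s) :
    ContDiff ℝ ∞ (fun x => F x s) :=
  contDiffOn_univ.1 (ContDiffOn.comp hF (contDiff_id.prodMk contDiff_const).contDiffOn
    fun _ _ => ⟨mem_univ _, hs⟩)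

protected theorem contDiffAt (hF : SmoothOnHalfPlane F) (x : ℝ) {s : ℝ} (hs : 0 < s) :
    ContDiffAt ℝ ∞ (fun q : ℝ × ℝ => F q.1 q.2) (x, s) :=
  ContDiffOn.contDiffAt hF (prod_mem_nhds univ_mem (Ici_mem_nhds hs))

theorem hasDerivAt_left (hF : SmoothOnHalfPlane F) {x s : ℝ} (hs : 0 < s) :
    HasDerivAt (fun y => F y s) (fderiv ℝ (fun q : ℝ × ℝ => F q.1 q.2) (x, s) (1, 0)) x := by
  have h := ((hF.contDiffAt x hs).differentiableAt (by simp)).hasFDerivAt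
  exact h.comp_hasDerivAt x ((hasDerivAt_id x).prodMk (hasDerivAt_const x s))

theorem hasDerivAt_right (hF : SmoothOnHalfPlane F) {x s : ℝ} (hs : 0 < s) :
    HasDerivAt (fun r => F x r) (fderiv ℝ (fun q : ℝ × ℝ => F q.1 q.2) (x, s) (0, 1)) s := by
  have h := ((hF.contDiffAt x hs).differentiableAt (by simp)).hasFDerivAt
  exact h.comp_hasDerivAt s ((hasDerivAt_const s x).prodMk (hasDerivAt_id s))

protected theorem deriv (hF : SmoothOnHalfPlane F) :
    SmoothOnHalfPlane (fun x s => deriv (fun y => F y s) x) := by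
  have hS : UniqueDiffOn ℝ ((univ : Set ℝ) ×ˢ Ici (0 : ℝ)) :=
    uniqueDiffOn_univ.prod (uniqueDiffOn_Ici 0)
  refine ((hF.fderivWithin hS (by simp)).clm_apply
    (contDiffOn_const (c := ((1 : ℝ), (0 : ℝ))))).congr fun q hq => ?_
  have hslice : HasDerivWithinAt (fun y : ℝ => (y, q.2)) (1, 0) univ q.1 :=
    ((hasDerivAt_id q.1).prodMk (hasDerivAt_const q.1 q.2)).hasDerivWithinAt
  have hmaps : MapsTo (fun y : ℝ => (y, q.2)) univ (univ ×ˢ Ici (0 : ℝ)) :=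
    fun _ _ => ⟨mem_univ _, hq.2⟩
  have hcomp := (hF.differentiableOn (by simp) q hq).hasFDerivWithinAt.comp_hasDerivWithinAt
    q.1 hslice hmaps
  exact (hasDerivWithinAt_univ.1 hcomp).deriv

protected theorem iteratedDeriv (hF : SmoothOnHalfPlane F) (l : ℕ) :
    SmoothOnHalfPlane (fun x s => iteratedDeriv l (fun y => F y s) x) := by
  induction l with
  | zero => simpa only [iteratedDeriv_zero] using hF
  | succ l ih => simpa only [iteratedDeriv_succ] using ih.deriv

theorem deriv_deriv_comm (hF : SmoothOnHalfPlane F) (x : ℝ) {s : ℝ} (hs : 0 < s) :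
    deriv (fun r => deriv (fun y => F y r) x) s = deriv (fun y => deriv (fun r => F y r) s) x := by
  set f : ℝ × ℝ → ℝ := fun q => F q.1 q.2
  have hf := hF.contDiffAt x hs
  have hf' : HasFDerivAt (fderiv ℝ f) (fderiv ℝ (fderiv ℝ f) (x, s)) (x, s) :=
    ((hf.fderiv_right (m := 1) (by norm_cast)).differentiableAt (by simp)).hasFDerivAt
  have hsymm : IsSymmSndFDerivAt ℝ f (x, s) := hf.isSymmSndFDerivAt (by
    simp only [minSmoothness_of_isRCLikeNormedField]
    exact WithTop.coe_le_coe.2 (le_top : (2 : ℕ∞) ≤ ⊤))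
  have htime : HasDerivAt (fun r => fderiv ℝ f (x, r) (1, 0))
      (fderiv ℝ (fderiv ℝ f) (x, s) (0, 1) (1, 0)) s := by
    have h := hf'.comp_hasDerivAt s ((hasDerivAt_const s x).prodMk (hasDerivAt_id s))
    simpa using h.clm_apply (hasDerivAt_const s ((1 : ℝ), (0 : ℝ)))
  have hspace : HasDerivAt (fun y => fderiv ℝ f (y, s) (0, 1))
      (fderiv ℝ (fderiv ℝ f) (x, s) (1, 0) (0, 1)) x := by
    have h := hf'.comp_hasDerivAt x ((hasDerivAt_id x).prodMk (hasDerivAt_const x s))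
    simpa using h.clm_apply (hasDerivAt_const x ((0 : ℝ), (1 : ℝ)))
  have hleft : (fun r => deriv (fun y => F y r) x) =ᶠ[𝓝 s] fun r => fderiv ℝ f (x, r) (1, 0) := by
    filter_upwards [Ioi_mem_nhds hs] with r hr using (hF.hasDerivAt_left hr).deriv
  have hright : (fun y => deriv (fun r => F y r) s) = fun y => fderiv ℝ f (y, s) (0, 1) :=
    funext fun y => (hF.hasDerivAt_right hs).deriv
  rw [hleft.deriv_eq, hright, htime.deriv, hspace.deriv]
  exact hsymm _ _

theorem hasDerivAt_iteratedDeriv (hF : SmoothOnHalfPlane F) (l : ℕ) (x : ℝ) {s : ℝ} (hs : 0 < s) :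
    HasDerivAt (fun r => iteratedDeriv l (fun y => F y r) x)
      (iteratedDeriv l (fun y => deriv (fun r => F y r) s) x) s := by
  induction l generalizing F with
  | zero =>
    simp only [iteratedDeriv_zero]
    exact (hF.hasDerivAt_right hs).differentiableAt.hasDerivAt
  | succ l ih =>
    have h := ih hF.deriv
    simp only [hF.deriv_deriv_comm _ hs] at h
    simpa only [iteratedDeriv_succ'] using h

theorem continuousOn_deriv_right (hF : SmoothOnHalfPlane F) :
    ContinuousOn (fun q : ℝ × ℝ => deriv (fun r => F q.1 r) q.2) (univ ×ˢ Ioi 0) := by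
  have hfderiv : ContinuousOn (fun q => fderiv ℝ (fun q : ℝ × ℝ => F q.1 q.2) q (0, 1))
      (univ ×ˢ Ioi 0) := fun q hq =>
    (((hF.contDiffAt q.1 hq.2).fderiv_right (m := 1) (by norm_cast)).continuousAt.clm_apply
      continuousAt_const).continuousWithinAt
  exact hfderiv.congr fun q hq => (hF.hasDerivAt_right hq.2).deriv

theorem hasDerivAt_integral (hF : SmoothOnHalfPlane F) {s : ℝ} (hs : 0 < s) (a b : ℝ) :
    HasDerivAt (fun r => ∫ x in a..b, F x r) (∫ x in a..b, deriv (fun r => F x r) s) s := by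
  have hcont := hF.continuousOn_deriv_right
  have hpos : Icc (s / 2) (2 * s) ⊆ Ioi 0 := fun r hr => (half_pos hs).trans_le hr.1
  have hnhds : Icc (s / 2) (2 * s) ∈ 𝓝 s := Icc_mem_nhds (by linarith) (by linarith)
  obtain ⟨M, hM⟩ := (isCompact_uIcc (a := a) (b := b)).prod
    (isCompact_Icc (a := s / 2) (b := 2 * s))
    |>.exists_bound_of_continuousOn (hcont.mono (prod_mono (subset_univ _) hpos))
  refine (intervalIntegral.hasDerivAt_integral_of_dominated_loc_of_deriv_le
    (F := fun r x => F x r) (F' := fun r x => deriv (fun r => F x r) r) (bound := fun _ => M)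
    hnhds ?_ ?_ ?_ ?_ ?_ ?_).2
  · filter_upwards [Ioi_mem_nhds hs] with r hr
    exact (hF.contDiff_slice (le_of_lt hr)).continuous.aestronglyMeasurable
  · exact (hF.contDiff_slice hs.le).continuous.intervalIntegrable _ _
  · have hslice : Continuous fun x => deriv (fun r => F x r) s :=
      hcont.comp_continuous (f := fun x : ℝ => (x, s)) (by fun_prop) fun x => ⟨mem_univ _, hs⟩
    exact hslice.aestronglyMeasurable
  · exact Eventually.of_forall fun x hx r hr => hM (x, r) ⟨uIoc_subset_uIcc hx, hr⟩
  · exact intervalIntegrable_const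
  · exact Eventually.of_forall fun x _ r hr =>
      (hF.hasDerivAt_right (hpos hr)).differentiableAt.hasDerivAt

theorem exists_abs_le (hF : SmoothOnHalfPlane F)
    (hper : ∀ s, 0 ≤ s → Function.Periodic (fun x => F x s) (2 * π)) (T : ℝ) :
    ∃ M, ∀ x, ∀ s ∈ Icc 0 T, |F x s| ≤ M := by
  obtain ⟨M, hM⟩ := (isCompact_Icc (a := 0) (b := 2 * π)).prod (isCompact_Icc (a := 0) (b := T))
    |>.exists_bound_of_continuousOn
      (ContinuousOn.mono hF.continuousOn (prod_mono (subset_univ _) fun r hr => hr.1))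
  refine ⟨M, fun x s hs => ?_⟩
  obtain ⟨y, hy, hxy : F x s = F y s⟩ := (hper s hs.1).exists_mem_Ico₀ two_pi_pos x
  rw [hxy]
  exact hM (y, s) ⟨Ico_subset_Icc_self hy, hs⟩

theorem exists_abs_le_mul_exp (hF : SmoothOnHalfPlane F)
    (hper : ∀ s, 0 ≤ s → Function.Periodic (fun x => F x s) (2 * π)) {β C : ℝ}
    (h : ∀ᶠ s in atTop, ∀ x, |F x s| ≤ C * exp (-β * s)) :
    ∃ C, 0 < C ∧ ∀ s, 0 < s → ∀ x, |F x s| ≤ C * exp (-β * s) := by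
  obtain ⟨T, hT⟩ := eventually_atTop.1 h
  obtain ⟨M, hM⟩ := hF.exists_abs_le hper T
  refine ⟨|C| + |M| * exp (|β| * T) + 1, by positivity, fun s hs x => ?_⟩
  have hexp := exp_pos (-β * s)
  rcases le_total T s with hTs | hsT
  · refine (hT s hTs x).trans (mul_le_mul_of_nonneg_right ?_ hexp.le)
    have : 0 ≤ |M| * exp (|β| * T) := by positivity
    linarith [le_abs_self C]
  · have hone : 1 ≤ exp (|β| * T) * exp (-β * s) := by
      rw [← exp_add, one_le_exp_iff]
      nlinarith [mul_le_mul (le_abs_self β) hsT hs.le (abs_nonneg β)]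
    calc
      |F x s| ≤ |M| * 1 := by linarith [hM x s ⟨hs.le, hsT⟩, le_abs_self M]
      _ ≤ |M| * (exp (|β| * T) * exp (-β * s)) := by gcongr
      _ ≤ _ := by nlinarith [abs_nonneg C]

end SmoothOnHalfPlane

section ODE

variable {y y' : ℝ → ℝ} {A b C : ℝ}

theorem isBigO_exp_of_hasDerivAt_le (hbA : b < A) (hy0 : ∀ᶠ s in atTop, 0 ≤ y s)
    (hy : ∀ᶠ s in atTop, HasDerivAt y (y' s) s)
    (hle : ∀ᶠ s in atTop, y' s ≤ -A * y s + C * exp (-b * s)) :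
    y =O[atTop] fun s => exp (-b * s) := by
  obtain ⟨T, hT⟩ := eventually_atTop.1 (hy.and hle)
  set c := C / (A - b) with hc
  have hAb : 0 < A - b := sub_pos.2 hbA
  have hexp (a s : ℝ) : HasDerivAt (fun s => exp (a * s)) (exp (a * s) * a) s := by
    simpa using! ((hasDerivAt_id s).const_mul a).exp
  set z := fun s => (y s - c * exp (-b * s)) * exp (A * s)
  have hz (s : ℝ) (hs : T ≤ s) : HasDerivAt z ((y' s - c * (exp (-b * s) * -b)) * exp (A * s) +
      (y s - c * exp (-b * s)) * (exp (A * s) * A)) s :=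
    ((hT s hs).1.sub ((hexp (-b) s).const_mul c)).mul (hexp A s)
  have hanti : AntitoneOn z (Ici T) := by
    refine antitoneOn_of_hasDerivWithinAt_nonpos (convex_Ici T)
      (fun s hs => (hz s hs).continuousAt.continuousWithinAt)
      (fun s hs => (hz s (interior_subset hs)).hasDerivWithinAt) fun s hs => ?_
    have hfactor : (y' s - c * (exp (-b * s) * -b)) * exp (A * s) +
        (y s - c * exp (-b * s)) * (exp (A * s) * A) =
        (y' s - (-A * y s + C * exp (-b * s))) * exp (A * s) := by
      rw [hc]; field_simp; ring
    rw [hfactor]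
    exact mul_nonpos_of_nonpos_of_nonneg (sub_nonpos.2 (hT s (interior_subset hs)).2) (exp_pos _).le
  refine .of_bound (|z T| + |c|) ?_
  filter_upwards [hy0, eventually_ge_atTop T, eventually_ge_atTop 0] with s hys hTs hs
  have hzs : z s ≤ |z T| := (hanti self_mem_Ici hTs hTs).trans (le_abs_self _)
  rw [norm_of_nonneg hys, norm_of_nonneg (exp_pos _).le]
  calc
    y s = z s * exp (-A * s) + c * exp (-b * s) := by
      simp only [z, mul_assoc, ← exp_add]
      ring_nf
      simp
    _ ≤ |z T| * exp (-b * s) + |c| * exp (-b * s) := by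
      gcongr
      exact le_abs_self c
    _ = _ := by ring

theorem eq_zero_of_hasDerivAt_self (hy : ∀ s, 0 < s → HasDerivAt y (y s) s)
    (hbdd : ∀ᶠ s in atTop, |y s| ≤ C) {s : ℝ} (hs : 0 < s) : y s = 0 := by
  have hz (t : ℝ) (ht : 0 < t) : HasDerivAt (fun t => y t * exp (-t)) 0 t := by
    simpa using! (hy t ht).mul (hasDerivAt_neg t).exp
  have hconst : ∀ t ∈ Ioi (0 : ℝ), y t * exp (-t) = y s * exp (-s) := fun t ht =>
    isOpen_Ioi.is_const_of_deriv_eq_zero isPreconnected_Ioi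
      (fun t ht => (hz t ht).differentiableAt.differentiableWithinAt)
      (fun t ht => (hz t ht).deriv) ht hs
  have hlim : Tendsto (fun t => y t * exp (-t)) atTop (𝓝 0) := by
    refine squeeze_zero_norm' (a := fun t => C * exp (-t)) ?_ (by
      simpa using tendsto_exp_neg_atTop_nhds_zero.const_mul C)
    filter_upwards [hbdd] with t ht
    rw [norm_mul, norm_of_nonneg (exp_pos _).le]
    gcongr
    exact ht
  have hzero : y s * exp (-s) = 0 := tendsto_nhds_unique
    (tendsto_const_nhds.congr' ((eventually_gt_atTop 0).mono fun t ht => (hconst t ht).symm)) hlim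
  exact (mul_eq_zero.1 hzero).resolve_right (exp_pos _).ne'

end ODE

theorem SmoothOnHalfPlane.hasDerivAt_energy {F : ℝ → ℝ → ℝ} (hF : SmoothOnHalfPlane F) {s : ℝ}
    (hs : 0 < s) : HasDerivAt (fun t => energy (fun x => F x t))
      (2 * ∫ x in 0..2 * π, F x s * deriv (fun t => F x t) s) s := by
  have hsq : SmoothOnHalfPlane fun x t => F x t ^ 2 := ContDiffOn.pow hF 2
  have hderiv (x : ℝ) : deriv (fun t => F x t ^ 2) s = 2 * (F x s * deriv (fun t => F x t) s) := by
    rw [((hF.hasDerivAt_right hs).differentiableAt.hasDerivAt.fun_pow 2).deriv]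
    ring
  have h := hsq.hasDerivAt_integral hs 0 (2 * π)
  rwa [funext hderiv, intervalIntegral.integral_const_mul] at h

/-- A smooth `2π`-periodic solution of `∂F/∂s = a(F) F'' + r(F)` with values in `U`. The equation
is imposed for positive times only, the solution being smooth up to the initial time `0`. -/
structure IsQuasilinearFlow (a r : ℝ → ℝ) (U : Set ℝ) (F : ℝ → ℝ → ℝ) : Prop where
  smooth : SmoothOnHalfPlane F
  periodic : ∀ s, 0 ≤ s → Function.Periodic (fun x => F x s) (2 * π)
  mem : ∀ x s, 0 ≤ s → F x s ∈ U
  deriv_eq : ∀ x s, 0 < s → deriv (fun t => F x t) s = quasilinearOp a r (fun y => F y s) x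

namespace IsQuasilinearFlow

variable {a r g : ℝ → ℝ} {U : Set ℝ} {F : ℝ → ℝ → ℝ} {c μ : ℝ}

theorem smoothPeriodic (hF : IsQuasilinearFlow a r U F) {s : ℝ} (hs : 0 ≤ s) :
    SmoothPeriodic fun x => F x s :=
  ⟨hF.smooth.contDiff_slice hs, hF.periodic s hs⟩

theorem hasDerivAt_energy_iteratedDeriv (hF : IsQuasilinearFlow a r U F) (l : ℕ) {s : ℝ}
    (hs : 0 < s) : HasDerivAt (fun t => energy (iteratedDeriv l fun x => F x t))
      (2 * ∫ x in 0..2 * π, iteratedDeriv l (fun x => F x s) x *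
        iteratedDeriv l (quasilinearOp a r fun x => F x s) x) s := by
  have h := (hF.smooth.iteratedDeriv l).hasDerivAt_energy hs
  simpa only [(hF.smooth.hasDerivAt_iteratedDeriv l _ hs).deriv, hF.deriv_eq _ s hs] using h

theorem energy_iteratedDeriv_one_isBigO (hF : IsQuasilinearFlow a r U F) (hU : IsOpen U)
    (hc : c ∈ U) (ha : ContDiffOn ℝ ∞ a U) (hr : ContDiffOn ℝ ∞ r U) (hg : ContDiffOn ℝ ∞ g U)
    (hac : 0 < a c) (hgc : deriv g c ≠ 0)
    (hconv : TendstoUniformly (fun s x => F x s) (fun _ => c) atTop)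
    (hcos : ∀ s, 0 < s → ∫ x in 0..2 * π, g (F x s) * cos x = 0)
    (hsin : ∀ s, 0 < s → ∫ x in 0..2 * π, g (F x s) * sin x = 0)
    (hμ : μ < 4 * a c - deriv r c) :
    (fun s => energy (iteratedDeriv 1 fun x => F x s)) =O[atTop] fun s => exp (-(2 * μ) * s) := by
  obtain ⟨ν, hμν, hν⟩ := exists_between hμ
  obtain ⟨δ, hδ, hdecay⟩ :=
    exists_integral_deriv_mul_deriv_quasilinearOp_le hU hc ha hr hg hac hgc hν
  refine isBigO_exp_of_hasDerivAt_le (A := 2 * ν) (C := 0) (by linarith)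
    (.of_forall fun s => energy_nonneg _)
    ((eventually_gt_atTop 0).mono fun s hs => hF.hasDerivAt_energy_iteratedDeriv 1 hs) ?_
  filter_upwards [eventually_gt_atTop 0, Metric.tendstoUniformly_iff.1 hconv δ hδ] with s hs hclose
  have h := hdecay (hF.smoothPeriodic hs.le) (fun x => by rw [← dist_eq, dist_comm]; exact hclose x)
    (hcos s hs) (hsin s hs)
  simp only [iteratedDeriv_one]
  linarith

theorem energy_iteratedDeriv_succ_isBigO (hF : IsQuasilinearFlow a r U F) (hU : IsOpen U)
    (hc : c ∈ U) (ha : ContDiffOn ℝ ∞ a U) (hr : ContDiffOn ℝ ∞ r U) (hac : 0 < a c)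
    (hconv : TendstoUniformly (fun s x => F x s) (fun _ => c) atTop) (hμ : 0 < μ) {n : ℕ}
    (h : (fun s => energy (iteratedDeriv (n + 1) fun x => F x s)) =O[atTop]
      fun s => exp (-(2 * μ) * s)) :
    (fun s => energy (iteratedDeriv (n + 2) fun x => F x s)) =O[atTop]
      fun s => exp (-(2 * μ) * s) := by
  obtain ⟨ρ, hρ, hball⟩ := Metric.nhds_basis_closedBall.mem_iff.1 (inter_mem (hU.mem_nhds hc)
    ((ha.continuousOn.continuousAt (hU.mem_nhds hc)).eventually_const_lt hac))
  obtain ⟨η, hη, C, hC⟩ := exists_integral_iteratedDeriv_mul_quasilinearOp_le_of_rate hU ha hr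
    (isCompact_closedBall c ρ) (fun y hy => (hball hy).1) (fun y hy => (hball hy).2) n (μ + 1) 1
  have hsmall : Tendsto (fun s => energy (iteratedDeriv (n + 1) fun x => F x s)) atTop (𝓝 0) := by
    refine h.trans_tendsto (tendsto_exp_atBot.comp ?_)
    exact tendsto_id.const_mul_atTop_of_neg (by linarith)
  obtain ⟨D, hD⟩ := h.bound
  refine isBigO_exp_of_hasDerivAt_le (A := 2 * (μ + 1)) (C := 2 * (|C| * D)) (by linarith)
    (.of_forall fun s => energy_nonneg _)
    ((eventually_gt_atTop 0).mono fun s hs => hF.hasDerivAt_energy_iteratedDeriv (n + 2) hs) ?_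
  filter_upwards [eventually_gt_atTop 0, Metric.tendstoUniformly_iff.1 hconv ρ hρ, hD,
    hsmall.eventually_le_const hη, hsmall.eventually_le_const one_pos] with s hs hclose hDs hηs hs1
  have hv := hF.smoothPeriodic hs.le
  have hfirst := hv.energy_iteratedDeriv_mono le_rfl (Nat.le_add_left 1 n)
  rw [iteratedDeriv_one] at hfirst
  have hode := hC hv (fun x => by rw [Metric.mem_closedBall, dist_comm]; exact (hclose x).le)
    (hfirst.trans hηs) ((hv.sobolevBound_deriv n).mono_right hs1)
  rw [norm_of_nonneg (energy_nonneg _), norm_of_nonneg (exp_pos _).le] at hDs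
  have hforcing : C * energy (iteratedDeriv (n + 1) fun x => F x s) ≤
      |C| * (D * exp (-(2 * μ) * s)) :=
    mul_le_mul (le_abs_self C) hDs (energy_nonneg _) (abs_nonneg C)
  linarith

theorem exists_abs_iteratedDeriv_le (hF : IsQuasilinearFlow a r U F) {l : ℕ}
    (h0 : (fun s => energy (iteratedDeriv l fun x => F x s)) =O[atTop] fun s => exp (-(2 * μ) * s))
    (h1 : (fun s => energy (iteratedDeriv (l + 1) fun x => F x s)) =O[atTop]
      fun s => exp (-(2 * μ) * s)) :
    ∃ C, 0 < C ∧ ∀ s, 0 < s → ∀ x, |iteratedDeriv l (fun y => F y s) x| ≤ C * exp (-μ * s) := by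
  obtain ⟨D, hD⟩ := (h0.add h1).bound
  refine (hF.smooth.iteratedDeriv l).exists_abs_le_mul_exp (C := √(2 * D))
    (fun s hs => ((hF.smoothPeriodic hs).iteratedDeriv l).periodic) ?_
  filter_upwards [hD, eventually_ge_atTop 0] with s hDs hs x
  have hsup := ((hF.smoothPeriodic hs).iteratedDeriv l).sq_le x
  rw [← iteratedDeriv_succ] at hsup
  rw [norm_of_nonneg (add_nonneg (energy_nonneg _) (energy_nonneg _)),
    norm_of_nonneg (exp_pos _).le] at hDs
  have hexp : exp (-(2 * μ) * s) = exp (-μ * s) ^ 2 := by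
    rw [← exp_nat_mul]
    ring_nf
  calc
    _ ≤ √(2 * D * exp (-μ * s) ^ 2) := abs_le_sqrt (by rw [← hexp]; linarith)
    _ = _ := by rw [sqrt_mul' _ (sq_nonneg _), sqrt_sq (exp_pos _).le]

theorem iteratedDeriv_decay (hF : IsQuasilinearFlow a r U F) (hU : IsOpen U) (hc : c ∈ U)
    (ha : ContDiffOn ℝ ∞ a U) (hr : ContDiffOn ℝ ∞ r U) (hg : ContDiffOn ℝ ∞ g U) (hac : 0 < a c)
    (hgc : deriv g c ≠ 0) (hconv : TendstoUniformly (fun s x => F x s) (fun _ => c) atTop)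
    (hcos : ∀ s, 0 < s → ∫ x in 0..2 * π, g (F x s) * cos x = 0)
    (hsin : ∀ s, 0 < s → ∫ x in 0..2 * π, g (F x s) * sin x = 0)
    (hμ0 : 0 < μ) (hμ : μ < 4 * a c - deriv r c) {l : ℕ} (hl : 1 ≤ l) :
    ∃ C, 0 < C ∧ ∀ s, 0 < s → ∀ x, |iteratedDeriv l (fun y => F y s) x| ≤ C * exp (-μ * s) := by
  have henergy (n : ℕ) : (fun s => energy (iteratedDeriv (n + 1) fun x => F x s)) =O[atTop]
      fun s => exp (-(2 * μ) * s) := by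
    induction n with
    | zero =>
      exact hF.energy_iteratedDeriv_one_isBigO hU hc ha hr hg hac hgc hconv hcos hsin hμ
    | succ n ih => exact hF.energy_iteratedDeriv_succ_isBigO hU hc ha hr hac hconv hμ0 ih
  obtain ⟨n, rfl⟩ := Nat.exists_eq_add_of_le' hl
  exact hF.exists_abs_iteratedDeriv_le (henergy n) (henergy (n + 1))

theorem exists_eventually_abs_integral_mul_le (hF : IsQuasilinearFlow a r U F) (hU : IsOpen U)
    (hc : c ∈ U) (hg : ContDiffOn ℝ ∞ g U)
    (hconv : TendstoUniformly (fun s x => F x s) (fun _ => c) atTop)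
    {e : ℝ → ℝ} (he : Continuous e) :
    ∃ C, ∀ᶠ s in atTop, |∫ x in 0..2 * π, g (F x s) * e x| ≤ C := by
  obtain ⟨ρ, hρ, hball⟩ := Metric.nhds_basis_closedBall.mem_iff.1 (hU.mem_nhds hc)
  obtain ⟨M, hM⟩ := exists_sq_le_of_isCompact hg.continuousOn (isCompact_closedBall c ρ) hball
  refine ⟨√(2 * π * M * energy e), ?_⟩
  filter_upwards [Metric.tendstoUniformly_iff.1 hconv ρ hρ, eventually_ge_atTop 0] with s hclose hs
  have hgF := ((hF.smoothPeriodic hs).comp hg fun x => hF.mem x s hs).continuous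
  refine abs_le_sqrt ((sq_integral_mul_le_energy_mul_energy hgF he).trans ?_)
  refine mul_le_mul_of_nonneg_right (energy_le_of_sq_le hgF fun x => hM _ ?_) (energy_nonneg e)
  rw [Metric.mem_closedBall, dist_comm]
  exact (hclose x).le

end IsQuasilinearFlow

/-- A normalized solution of the general curve shortening flow with `G(x) = |x|^(p-1)`, described
by the normalized curvature `K` as a function of the tangent angle and of the rescaled time. In the
form of the equation used here `K` is the `p`-th power of the geometric curvature, that is, the
normal speed, so that `K^(-1/p)` is the radius of curvature. -/
def IsNormalizedFlow (p : ℝ) (K : ℝ → ℝ → ℝ) : Prop :=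
  IsQuasilinearFlow (fun y => p * y ^ (1 + 1 / p)) (fun y => p * y ^ (2 + 1 / p) - p * y) (Ioi 0) K

theorem contDiffOn_rpow_const (q : ℝ) : ContDiffOn ℝ ∞ (fun y : ℝ => y ^ q) (Ioi 0) :=
  contDiffOn_id.rpow_const_of_ne fun _ hy => ne_of_gt hy

theorem hasDerivAt_rpow_const_one (q : ℝ) : HasDerivAt (fun y : ℝ => y ^ q) q 1 := by
  simpa using hasDerivAt_rpow_const (x := 1) (p := q) (.inl one_ne_zero)

theorem deriv_mul_rpow_sub_mul_one {p : ℝ} (hp : p ≠ 0) :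
    deriv (fun y : ℝ => p * y ^ (2 + 1 / p) - p * y) 1 = p + 1 := by
  rw [(((hasDerivAt_rpow_const_one _).const_mul p).fun_sub
    ((hasDerivAt_id' 1).const_mul p)).deriv]
  field_simp
  ring

namespace IsNormalizedFlow

variable {p : ℝ} {K : ℝ → ℝ → ℝ}

theorem deriv_rpow_neg_inv (hK : IsNormalizedFlow p K) (hp : p ≠ 0) (x : ℝ) {s : ℝ} (hs : 0 < s) :
    deriv (fun t => K x t ^ (-1 / p)) s =
      K x s ^ (-1 / p) - (deriv (deriv fun y => K y s) x + K x s) := by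
  have hpos : 0 < K x s := hK.mem x s hs.le
  have hKt := (hK.smooth.hasDerivAt_right (x := x) hs).differentiableAt.hasDerivAt
  rw [hK.deriv_eq x s hs] at hKt
  rw [(hKt.rpow_const (.inl hpos.ne')).deriv, quasilinearOp]
  have h1 : K x s ^ (1 + 1 / p) = K x s * (K x s ^ (-1 / p))⁻¹ := by
    rw [← rpow_neg hpos.le, rpow_add hpos, rpow_one]
    ring_nf
  have h2 : K x s ^ (2 + 1 / p) = K x s ^ 2 * (K x s ^ (-1 / p))⁻¹ := by
    rw [← rpow_neg hpos.le, rpow_add hpos, rpow_two]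
    ring_nf
  have h3 : K x s ^ (-1 / p - 1) = K x s ^ (-1 / p) / K x s := by
    rw [rpow_sub hpos, rpow_one]
  have := (rpow_pos_of_pos hpos (-1 / p)).ne'
  rw [h1, h2, h3]
  field_simp
  ring

theorem hasDerivAt_integral_rpow_mul (hK : IsNormalizedFlow p K) (hp : p ≠ 0) {e : ℝ → ℝ}
    (he : SmoothPeriodic e) (he'' : ∀ x, deriv (deriv e) x = -e x) {s : ℝ} (hs : 0 < s) :
    HasDerivAt (fun t => ∫ x in 0..2 * π, K x t ^ (-1 / p) * e x)
      (∫ x in 0..2 * π, K x s ^ (-1 / p) * e x) s := by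
  have hsmooth : SmoothOnHalfPlane fun x t => K x t ^ (-1 / p) * e x :=
    (ContDiffOn.rpow_const_of_ne hK.smooth fun q hq => ne_of_gt (hK.mem q.1 q.2 hq.2)).mul
      (he.contDiff.comp contDiff_fst).contDiffOn
  have hv := hK.smoothPeriodic hs.le
  have hw := hv.comp (contDiffOn_rpow_const (-1 / p)) fun x => hK.mem x s hs.le
  have hcancel : ∫ x in 0..2 * π, e x * (deriv (deriv fun y => K y s) x + K x s) = 0 := by
    simp only [mul_add]
    rw [integral_period_add (he.mul hv.deriv.deriv).continuous (he.mul hv).continuous,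
      he.integral_mul_deriv_deriv hv]
    simp [he'', intervalIntegral.integral_neg]
  have hderiv (x : ℝ) : deriv (fun t => K x t ^ (-1 / p) * e x) s =
      K x s ^ (-1 / p) * e x + -1 * (e x * (deriv (deriv fun y => K y s) x + K x s)) := by
    rw [deriv_mul_const_field, hK.deriv_rpow_neg_inv hp x hs]
    ring
  have h := hsmooth.hasDerivAt_integral hs 0 (2 * π)
  rwa [funext hderiv, integral_period_add (hw.mul he).continuous
    ((he.mul (hv.deriv.deriv.add hv)).continuous.const_mul _),
    intervalIntegral.integral_const_mul, hcancel, mul_zero, add_zero] at h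

theorem integral_rpow_mul_eq_zero (hK : IsNormalizedFlow p K) (hp : p ≠ 0)
    (hconv : TendstoUniformly (fun s x => K x s) (fun _ => 1) atTop) {e : ℝ → ℝ}
    (he : SmoothPeriodic e) (he'' : ∀ x, deriv (deriv e) x = -e x) {s : ℝ} (hs : 0 < s) :
    ∫ x in 0..2 * π, K x s ^ (-1 / p) * e x = 0 := by
  obtain ⟨C, hC⟩ := hK.exists_eventually_abs_integral_mul_le isOpen_Ioi (mem_Ioi.2 one_pos)
    (contDiffOn_rpow_const (-1 / p)) hconv he.continuous
  exact eq_zero_of_hasDerivAt_self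
    (fun t ht => hK.hasDerivAt_integral_rpow_mul hp he he'' ht) hC hs

end IsNormalizedFlow

theorem all_derivatives_sup_decay_general {p β : ℝ} {K : ℝ → ℝ → ℝ}
    (hsmooth : ContDiffOn ℝ ∞ (fun q : ℝ × ℝ => K q.1 q.2) (univ ×ˢ Ici 0))
    (hper : ∀ τ, 0 ≤ τ → Function.Periodic (fun θ => K θ τ) (2 * π))
    (hpos : ∀ θ τ, 0 ≤ τ → 0 < K θ τ)
    (hpde : ∀ θ τ, 0 < τ → deriv (fun s => K θ s) τ =
      p * K θ τ ^ (1 + 1 / p) * deriv (deriv fun x => K x τ) θ + p * K θ τ ^ (2 + 1 / p) -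
        p * K θ τ)
    (hconv : TendstoUniformly (fun τ θ => K θ τ) (fun _ => 1) atTop) (hβ0 : 0 < β)
    (hβ : β < 3 * p - 1) {l : ℕ} (hl : 1 ≤ l) :
    ∃ C, 0 < C ∧ ∀ τ, 0 < τ → ∀ θ, |iteratedDeriv l (fun x => K x τ) θ| ≤ C * exp (-β * τ) := by
  have hK : IsNormalizedFlow p K :=
    ⟨hsmooth, hper, hpos, fun θ τ hτ => (hpde θ τ hτ).trans (add_sub_assoc _ _ _)⟩
  have hp : 0 < p := by linarith
  refine IsQuasilinearFlow.iteratedDeriv_decay (g := fun y => y ^ (-1 / p)) hK isOpen_Ioi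
    (mem_Ioi.2 one_pos) (contDiffOn_const.mul (contDiffOn_rpow_const _))
    ((contDiffOn_const.mul (contDiffOn_rpow_const _)).sub (contDiffOn_const.mul contDiffOn_id))
    (contDiffOn_rpow_const _) (by simpa using hp) ?_ hconv
    (fun s hs => hK.integral_rpow_mul_eq_zero hp.ne' hconv .cos (by simp) hs)
    (fun s hs => hK.integral_rpow_mul_eq_zero hp.ne' hconv .sin (by simp) hs) hβ0 ?_ hl
  · rw [(hasDerivAt_rpow_const_one _).deriv]
    exact div_ne_zero (by norm_num) hp.ne'
  · rw [deriv_mul_rpow_sub_mul_one hp.ne', one_rpow]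
    linarith

/-- Proposition 2.1: every angular derivative of the normalized curvature
decays exponentially, with rate arbitrarily close to `2p`. -/
theorem all_derivatives_sup_decay
    (p : ℝ) (hp : 1 ≤ p) (K : ℝ → ℝ → ℝ)
    (hsmooth : ContDiffOn ℝ (⊤ : ℕ∞) (fun q : ℝ × ℝ => K q.1 q.2) (univ ×ˢ Ici 0))
    (hper : ∀ τ : ℝ, Function.Periodic (fun θ => K θ τ) (2 * π))
    (hpos : ∀ θ τ : ℝ, 0 ≤ τ → 0 < K θ τ)
    (hpde : ∀ θ : ℝ, ∀ τ ∈ Ioi (0:ℝ),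
      deriv (fun s => K θ s) τ =
        p * K θ τ ^ (1 + 1 / p) * deriv (deriv (fun x => K x τ)) θ
          + p * K θ τ ^ (2 + 1 / p) - p * K θ τ)
    (hconv : TendstoUniformly (fun τ θ => K θ τ) (fun _ => 1) atTop) :
    ∀ l : ℕ, 1 ≤ l → ∀ α : ℝ, 0 < α → α < 1 →
      ∃ C : ℝ, 0 < C ∧ ∀ τ : ℝ, 0 < τ → ∀ θ : ℝ,
        |iteratedDeriv l (fun x => K x τ) θ| ≤ C * Real.exp (-2 * α * p * τ) := by
  intro l hl α hα0 hα1
  have hrate : 2 * α * p < 3 * p - 1 := by nlinarith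
  simpa only [neg_mul] using all_derivatives_sup_decay_general hsmooth (fun τ _ => hper τ) hpos hpde
    hconv (by positivity : 0 < 2 * α * p) hrate hl
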